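/- Let μ be a probability measure on ℝ whose cumulative distribution function F(x) = μ((−∞, x]) is continuous, let G be the cumulative distribution function of μ ∗ μ, and define F⁻¹(t) := inf{x ∈ ℝ : F(x) ≥ t}, G⁻¹(v) := inf{x ∈ ℝ : G(x) ≥ v}, and k_v(t) := F(G⁻¹(v) − F⁻¹(t)) for v, t ∈ (0,1). Then: (a) for every v, the map t ↦ k_v(t) is decreasing; (b) for every t, the map v ↦ k_v(t) is increasing; and (c) for every v ∈ (0,1) and every u ∈ [0,1], ∫₀¹ min(k_v(t), u) dt = ∫₀ᵘ k_v(t) dt. Consequently, C(v,u) := ∫₀ᵘ k_v(t) dt defines a stochastically increasing bivariate copula that is a fixed point of the upper product transform: T(C) = C. -/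

import Mathlib

open MeasureTheory Set

noncomputable section

/-- A bivariate copula: a function `[0,1]² → [0,1]` (encoded on `ℝ × ℝ`, with all
conditions imposed on `[0,1]²`) with the copula boundary conditions and the
2-increasing property. -/
def IsCopula (C : ℝ → ℝ → ℝ) : Prop :=
  (∀ v ∈ Icc (0:ℝ) 1, ∀ u ∈ Icc (0:ℝ) 1, C v u ∈ Icc (0:ℝ) 1) ∧
  (∀ v ∈ Icc (0:ℝ) 1, C v 0 = 0) ∧
  (∀ u ∈ Icc (0:ℝ) 1, C 0 u = 0) ∧
  (∀ v ∈ Icc (0:ℝ) 1, C v 1 = v) ∧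
  (∀ u ∈ Icc (0:ℝ) 1, C 1 u = u) ∧
  (∀ v₁ v₂ u₁ u₂ : ℝ, 0 ≤ v₁ → v₁ ≤ v₂ → v₂ ≤ 1 → 0 ≤ u₁ → u₁ ≤ u₂ → u₂ ≤ 1 →
    0 ≤ C v₂ u₂ - C v₁ u₂ - C v₂ u₁ + C v₁ u₁)

/-- A derivative family `(h_v)_{v ∈ [0,1]}` for a copula `C`:
each `h_v : [0,1] → [0,1]` is Lebesgue measurable, `C(v,u) = ∫₀ᵘ h_v(t) dt`,
`v ↦ h_v(t)` is increasing, and `∫₀¹ h_v(t) dt = v`. -/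
def IsDerivFamily (C : ℝ → ℝ → ℝ) (h : ℝ → ℝ → ℝ) : Prop :=
  (∀ v ∈ Icc (0:ℝ) 1, Measurable (h v)) ∧
  (∀ v ∈ Icc (0:ℝ) 1, ∀ t ∈ Icc (0:ℝ) 1, h v t ∈ Icc (0:ℝ) 1) ∧
  (∀ v ∈ Icc (0:ℝ) 1, ∀ u ∈ Icc (0:ℝ) 1, C v u = ∫ t in (0:ℝ)..u, h v t) ∧
  (∀ t ∈ Icc (0:ℝ) 1, MonotoneOn (fun v => h v t) (Icc (0:ℝ) 1)) ∧
  (∀ v ∈ Icc (0:ℝ) 1, (∫ t in (0:ℝ)..1, h v t) = v)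

/-- The cumulative distribution function of a measure on `ℝ`. -/
def cdfOf (μ : Measure ℝ) (x : ℝ) : ℝ := (μ (Iic x)).toReal

/-- The convolution `μ ∗ μ`: the law of the sum of two independent random
variables each distributed according to `μ`. -/
def convSelf (μ : Measure ℝ) : Measure ℝ :=
  Measure.map (fun p : ℝ × ℝ => p.1 + p.2) (μ.prod μ)

/-- The quantile function `F⁻¹(t) = inf {x : F x ≥ t}` of a distribution
function `F`. -/
def quantile (F : ℝ → ℝ) (t : ℝ) : ℝ := sInf {x : ℝ | t ≤ F x}

/-- `k_v(t) = F(G⁻¹(v) − F⁻¹(t))`, where `F` is the cdf of `μ` and `G` the cdf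
of `μ ∗ μ`. -/
def kConv (μ : Measure ℝ) (v t : ℝ) : ℝ :=
  cdfOf μ (quantile (cdfOf (convSelf μ)) v - quantile (cdfOf μ) t)

/-- The derivative family `k_v`, extended to the boundary parameters `v = 0`
(by `0`) and `v = 1` (by `1`). -/
def kConvBar (μ : Measure ℝ) (v t : ℝ) : ℝ :=
  if v ≤ 0 then 0 else if 1 ≤ v then 1 else kConv μ v t

/-!
By the Galois property `F⁻¹ s ≤ x ↔ s ≤ F x`, the inequality `s ≤ F (z - F⁻¹ t)` means
`F⁻¹ s + F⁻¹ t ≤ z`, which is symmetric in `s` and `t`. So every `k_v` is its own generalized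
inverse, which forces it to be decreasing. Slicing the region under the graph of `min (k_v, u)`
horizontally (layer cake), the slice at height `s ≤ u` is `{t | s ≤ k_v t} = {t | t ≤ k_v s}`, of
length `k_v s`; this is the fixed-point identity. It also gives concavity in `u`, since
`u ↦ min (k_v t) u` is concave for each `t`.

For the margins, `F⁻¹` pushes Lebesgue measure on `(0,1)` forward to `μ`, hence
`∫₀¹ F (z - F⁻¹ t) dt = ∫ F (z - x) dμ(x) = G z`, and `G (G⁻¹ v) = v` because `G` inherits
continuity from `F`.
-/

namespace IsDerivFamily

variable {C h : ℝ → ℝ → ℝ} {v a b : ℝ}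

lemma mem_Icc (hC : IsDerivFamily C h) (hv : v ∈ Icc (0 : ℝ) 1) {t : ℝ}
    (ht : t ∈ Icc (0 : ℝ) 1) : h v t ∈ Icc (0 : ℝ) 1 :=
  hC.2.1 v hv t ht

lemma eq_integral (hC : IsDerivFamily C h) (hv : v ∈ Icc (0 : ℝ) 1) {u : ℝ}
    (hu : u ∈ Icc (0 : ℝ) 1) : C v u = ∫ t in (0 : ℝ)..u, h v t :=
  hC.2.2.1 v hv u hu

lemma intervalIntegrable (hC : IsDerivFamily C h) (hv : v ∈ Icc (0 : ℝ) 1)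
    (ha : a ∈ Icc (0 : ℝ) 1) (hb : b ∈ Icc (0 : ℝ) 1) : IntervalIntegrable (h v) volume a b := by
  have ⟨hmeas, _⟩ := hC
  have hint : IntegrableOn (h v) (Icc 0 1) :=
    Measure.integrableOn_of_bounded measure_Icc_lt_top.ne (hmeas v hv).aestronglyMeasurable
      ((ae_restrict_iff' measurableSet_Icc).2 <| .of_forall fun t ht ↦
        (Real.norm_of_nonneg (hC.mem_Icc hv ht).1).trans_le (hC.mem_Icc hv ht).2)
  exact (hint.mono_set (uIcc_subset_Icc ha hb)).intervalIntegrable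

lemma sub_eq_integral (hC : IsDerivFamily C h) (hv : v ∈ Icc (0 : ℝ) 1)
    (ha : a ∈ Icc (0 : ℝ) 1) (hb : b ∈ Icc (0 : ℝ) 1) : C v b - C v a = ∫ t in a..b, h v t := by
  have h0 : (0 : ℝ) ∈ Icc (0 : ℝ) 1 := left_mem_Icc.2 zero_le_one
  rw [hC.eq_integral hv hb, hC.eq_integral hv ha]
  exact intervalIntegral.integral_interval_sub_left (hC.intervalIntegrable hv h0 hb)
    (hC.intervalIntegrable hv h0 ha)

lemma sub_mem_Icc (hC : IsDerivFamily C h) (hv : v ∈ Icc (0 : ℝ) 1)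
    (ha : a ∈ Icc (0 : ℝ) 1) (hb : b ∈ Icc (0 : ℝ) 1) (hab : a ≤ b) :
    C v b - C v a ∈ Icc 0 (b - a) := by
  have hmem : ∀ t ∈ Icc a b, h v t ∈ Icc 0 1 := fun t ht ↦
    hC.mem_Icc hv (Icc_subset_Icc ha.1 hb.2 ht)
  rw [hC.sub_eq_integral hv ha hb]
  refine ⟨intervalIntegral.integral_nonneg hab fun t ht ↦ (hmem t ht).1, ?_⟩
  calc ∫ t in a..b, h v t ≤ ∫ _ in a..b, (1 : ℝ) :=
        intervalIntegral.integral_mono_on hab (hC.intervalIntegrable hv ha hb)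
          intervalIntegrable_const fun t ht ↦ (hmem t ht).2
    _ = b - a := integral_one

lemma apply_zero (hC : IsDerivFamily C h) (hv : v ∈ Icc (0 : ℝ) 1) : C v 0 = 0 := by
  rw [hC.eq_integral hv (left_mem_Icc.2 zero_le_one), intervalIntegral.integral_same]

lemma apply_one (hC : IsDerivFamily C h) (hv : v ∈ Icc (0 : ℝ) 1) : C v 1 = v := by
  have ⟨_, _, _, _, hmargin⟩ := hC
  rw [hC.eq_integral hv (right_mem_Icc.2 zero_le_one), hmargin v hv]

lemma sub_le_sub_of_le {v₁ v₂ : ℝ} (hC : IsDerivFamily C h) (hv₁ : v₁ ∈ Icc (0 : ℝ) 1)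
    (hv₂ : v₂ ∈ Icc (0 : ℝ) 1) (hv : v₁ ≤ v₂) (ha : a ∈ Icc (0 : ℝ) 1) (hb : b ∈ Icc (0 : ℝ) 1)
    (hab : a ≤ b) : C v₁ b - C v₁ a ≤ C v₂ b - C v₂ a := by
  have ⟨_, _, _, hmono, _⟩ := hC
  rw [hC.sub_eq_integral hv₁ ha hb, hC.sub_eq_integral hv₂ ha hb]
  exact intervalIntegral.integral_mono_on hab (hC.intervalIntegrable hv₁ ha hb)
    (hC.intervalIntegrable hv₂ ha hb) fun t ht ↦
      hmono t (Icc_subset_Icc ha.1 hb.2 ht) hv₁ hv₂ hv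

theorem isCopula (hC : IsDerivFamily C h) : IsCopula C := by
  have h0 : (0 : ℝ) ∈ Icc (0 : ℝ) 1 := left_mem_Icc.2 zero_le_one
  have h1 : (1 : ℝ) ∈ Icc (0 : ℝ) 1 := right_mem_Icc.2 zero_le_one
  have hleft {v u : ℝ} (hv : v ∈ Icc (0 : ℝ) 1) (hu : u ∈ Icc (0 : ℝ) 1) : C v u ∈ Icc 0 u := by
    simpa only [hC.apply_zero hv, sub_zero] using hC.sub_mem_Icc hv h0 hu hu.1
  have hright {v u : ℝ} (hv : v ∈ Icc (0 : ℝ) 1) (hu : u ∈ Icc (0 : ℝ) 1) :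
      v - C v u ∈ Icc 0 (1 - u) := by
    simpa only [hC.apply_one hv] using hC.sub_mem_Icc hv hu h1 hu.2
  refine ⟨fun v hv u hu ↦ Icc_subset_Icc_right hu.2 (hleft hv hu), fun v ↦ hC.apply_zero,
    fun u hu ↦ ?_, fun v ↦ hC.apply_one, fun u hu ↦ ?_,
    fun v₁ v₂ u₁ u₂ hv₁ hv hv₂ hu₁ hu hu₂ ↦ ?_⟩
  · linarith [(hleft h0 hu).1, (hright h0 hu).1]
  · linarith [(hleft h1 hu).2, (hright h1 hu).2]
  · linarith [hC.sub_le_sub_of_le ⟨hv₁, hv.trans hv₂⟩ ⟨hv₁.trans hv, hv₂⟩ hv ⟨hu₁, hu.trans hu₂⟩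
      ⟨hu₁.trans hu, hu₂⟩ hu]

end IsDerivFamily

lemma volume_restrict_Ioo_Iic {a : ℝ} (ha : a ∈ Icc (0 : ℝ) 1) :
    volume.restrict (Ioo (0 : ℝ) 1) (Iic a) = ENNReal.ofReal a := by
  rw [restrict_Ioo_eq_restrict_Ioc, Measure.restrict_apply measurableSet_Iic, inter_comm,
    Ioc_inter_Iic, min_eq_right ha.2, Real.volume_Ioc, sub_zero]

lemma intervalIntegral_eq_setIntegral_Ioo {E : Type*} [NormedAddCommGroup E] [NormedSpace ℝ E]
    {a b : ℝ} (hab : a ≤ b) (f : ℝ → E) : ∫ t in a..b, f t = ∫ t in Ioo a b, f t := by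
  rw [intervalIntegral.integral_of_le hab, integral_Ioc_eq_integral_Ioo]

/-- A `[0,1]`-valued function on `(0,1)` that is its own generalized inverse: the region under its
graph is symmetric about the diagonal. Such functions are decreasing and satisfy
`∫₀¹ min (h, u) = ∫₀ᵘ h`. Values outside `(0,1)` are unconstrained. -/
structure IsSelfInverse (h : ℝ → ℝ) : Prop where
  mem_Icc : ∀ t ∈ Ioo (0 : ℝ) 1, h t ∈ Icc (0 : ℝ) 1
  le_comm : ∀ s ∈ Ioo (0 : ℝ) 1, ∀ t ∈ Ioo (0 : ℝ) 1, s ≤ h t ↔ t ≤ h s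

lemma isSelfInverse_zero : IsSelfInverse fun _ ↦ 0 where
  mem_Icc _ _ := left_mem_Icc.2 zero_le_one
  le_comm _ hs _ ht := by simp only [hs.1.not_ge, ht.1.not_ge]

lemma isSelfInverse_one : IsSelfInverse fun _ ↦ 1 where
  mem_Icc _ _ := right_mem_Icc.2 zero_le_one
  le_comm _ hs _ ht := by simp only [hs.2.le, ht.2.le]

namespace IsSelfInverse

variable {h : ℝ → ℝ} {u : ℝ}

lemma antitoneOn (hh : IsSelfInverse h) : AntitoneOn h (Ioo 0 1) := by
  intro t ht t' ht' htt'
  by_contra! hlt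
  obtain ⟨s, hs, hs'⟩ := exists_between hlt
  have hs01 : s ∈ Ioo (0 : ℝ) 1 :=
    ⟨(hh.mem_Icc t ht).1.trans_lt hs, hs'.trans_le (hh.mem_Icc t' ht').2⟩
  have : s ≤ h t := (hh.le_comm s hs01 t ht).2 (htt'.trans ((hh.le_comm s hs01 t' ht').1 hs'.le))
  exact this.not_gt hs

lemma integrable_min (hh : IsSelfInverse h) (u : ℝ) :
    Integrable (fun t ↦ min (h t) u) (volume.restrict (Ioo 0 1)) := by
  have hint : Integrable h (volume.restrict (Ioo 0 1)) :=
    .of_bound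
      (aemeasurable_restrict_of_antitoneOn measurableSet_Ioo hh.antitoneOn).aestronglyMeasurable 1
      ((ae_restrict_iff' measurableSet_Ioo).2 <| .of_forall fun t ht ↦
        (Real.norm_of_nonneg (hh.mem_Icc t ht).1).trans_le (hh.mem_Icc t ht).2)
  exact hint.inf (integrable_const u)

lemma volume_real_setOf_le (hh : IsSelfInverse h) {s : ℝ} (hs : s ∈ Ioo (0 : ℝ) 1) :
    (volume.restrict (Ioo 0 1)).real {t | s ≤ h t} = h s := by
  have hae : {t | s ≤ h t} =ᵐ[volume.restrict (Ioo 0 1)] Iic (h s) := by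
    filter_upwards [ae_restrict_mem measurableSet_Ioo] with t ht
    exact propext (hh.le_comm s hs t ht)
  rw [measureReal_congr hae, measureReal_def, volume_restrict_Ioo_Iic (hh.mem_Icc s hs),
    ENNReal.toReal_ofReal (hh.mem_Icc s hs).1]

theorem integral_min (hh : IsSelfInverse h) (hu : u ∈ Icc (0 : ℝ) 1) :
    ∫ t in (0 : ℝ)..1, min (h t) u = ∫ t in (0 : ℝ)..u, h t := by
  have hnonneg : 0 ≤ᵐ[volume.restrict (Ioo 0 1)] fun t ↦ min (h t) u := by
    filter_upwards [ae_restrict_mem measurableSet_Ioo] with t ht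
    exact le_min (hh.mem_Icc t ht).1 hu.1
  calc ∫ t in (0 : ℝ)..1, min (h t) u
      = ∫ t in Ioo 0 1, min (h t) u := intervalIntegral_eq_setIntegral_Ioo zero_le_one _
    _ = ∫ s in (0 : ℝ)..u, (volume.restrict (Ioo 0 1)).real {t | s ≤ min (h t) u} := by
        rw [intervalIntegral.integral_of_le hu.1]
        exact (hh.integrable_min u).integral_eq_integral_Ioc_meas_le hnonneg
          (.of_forall fun t ↦ min_le_right _ _)
    _ = ∫ s in (0 : ℝ)..u, h s := by
        refine intervalIntegral.integral_congr_Ioo_of_le hu.1 fun s hs ↦ ?_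
        simp only [le_min_iff, hs.2.le, and_true]
        exact hh.volume_real_setOf_le (Ioo_subset_Ioo_right hu.2 hs)

theorem concaveOn_integral (hh : IsSelfInverse h) :
    ConcaveOn ℝ (Icc (0 : ℝ) 1) fun u ↦ ∫ t in (0 : ℝ)..u, h t := by
  have hconc : ConcaveOn ℝ (Icc (0 : ℝ) 1) fun u ↦ ∫ t in Ioo 0 1, min (h t) u :=
    integral_concaveOn_of_integrand_ae (convex_Icc 0 1)
      (.of_forall fun t ↦ (concaveOn_const (h t) (convex_Icc 0 1)).inf
        (concaveOn_id (convex_Icc 0 1))) fun u _ ↦ hh.integrable_min u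
  exact hconc.congr fun u hu ↦
    (intervalIntegral_eq_setIntegral_Ioo zero_le_one _).symm.trans (hh.integral_min hu)

end IsSelfInverse

section Quantile

/-- The levels `t` at which the infimum defining `quantile F t` is a genuine one, rather than the
junk value `0` of `sInf` at an empty or unbounded set. There `quantile F` is monotone, and for
right-continuous increasing `F` it satisfies `quantile F t ≤ x ↔ t ≤ F x`. -/
def quantileDomain (F : ℝ → ℝ) : Set ℝ :=
  {t | {x | t ≤ F x}.Nonempty ∧ BddBelow {x | t ≤ F x}}

variable {F : ℝ → ℝ} {t x : ℝ}

lemma ordConnected_quantileDomain (F : ℝ → ℝ) : (quantileDomain F).OrdConnected :=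
  ⟨fun _ hs _ ht _ hr ↦ ⟨ht.1.mono fun _ ↦ hr.2.trans, hs.2.mono fun _ ↦ hr.1.trans⟩⟩

lemma monotoneOn_quantile (F : ℝ → ℝ) : MonotoneOn (quantile F) (quantileDomain F) :=
  fun _ hs _ ht hst ↦ csInf_le_csInf hs.2 ht.1 fun _ ↦ hst.trans

lemma quantile_eq_zero_of_notMem (ht : t ∉ quantileDomain F) : quantile F t = 0 := by
  obtain hempty | hbdd := not_and_or.1 ht
  · rw [quantile, not_nonempty_iff_eq_empty.1 hempty, Real.sInf_empty]
  · exact Real.sInf_of_not_bddBelow hbdd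

lemma measurable_quantile (F : ℝ → ℝ) : Measurable (quantile F) := by
  have hconn : (quantileDomain F).OrdConnected := ordConnected_quantileDomain F
  refine measurable_of_restrict_of_restrict_compl hconn.measurableSet ?_ ?_
  · have hmono : Monotone ((quantileDomain F).domRestrict (quantile F)) :=
      monotoneOn_iff_monotone.1 (monotoneOn_quantile F)
    exact hmono.measurable
  · have hzero : (quantileDomain F)ᶜ.domRestrict (quantile F) = fun _ ↦ 0 :=
      funext fun t ↦ quantile_eq_zero_of_notMem t.2
    exact hzero ▸ measurable_const

lemma le_apply_quantile (f : StieltjesFunction ℝ) (ht : {x | t ≤ f x}.Nonempty) :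
    t ≤ f (quantile f t) := by
  rw [← f.iInf_Ioi_eq]
  refine le_ciInf fun y ↦ ?_
  obtain ⟨x, hx, hxy⟩ := exists_lt_of_csInf_lt ht y.2
  exact le_trans hx (f.mono hxy.le)

lemma quantile_le_iff (f : StieltjesFunction ℝ) (ht : t ∈ quantileDomain f) :
    quantile f t ≤ x ↔ t ≤ f x :=
  ⟨fun h ↦ (le_apply_quantile f ht.1).trans (f.mono h), fun h ↦ csInf_le ht.2 h⟩

lemma apply_quantile_of_mem_range (f : StieltjesFunction ℝ) (ht : t ∈ quantileDomain f)
    (hrange : t ∈ range f) : f (quantile f t) = t := by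
  obtain ⟨x, rfl⟩ := hrange
  exact (f.mono ((quantile_le_iff f ht).2 le_rfl)).antisymm (le_apply_quantile f ht.1)

end Quantile

section Cdf

variable (μ : Measure ℝ) [IsProbabilityMeasure μ] {t x : ℝ}

lemma cdfOf_eq_cdf : cdfOf μ = ProbabilityTheory.cdf μ :=
  funext fun x ↦ (ProbabilityTheory.cdf_eq_real μ x).symm

lemma monotone_cdfOf : Monotone (cdfOf μ) :=
  cdfOf_eq_cdf μ ▸ ProbabilityTheory.monotone_cdf μ

lemma cdfOf_mem_Icc (x : ℝ) : cdfOf μ x ∈ Icc (0 : ℝ) 1 :=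
  ⟨measureReal_nonneg, measureReal_le_one⟩

lemma exists_cdfOf_lt (ht : 0 < t) : ∃ a, cdfOf μ a < t := by
  rw [cdfOf_eq_cdf]
  exact ((ProbabilityTheory.tendsto_cdf_atBot μ).eventually_lt_const ht).exists

lemma exists_lt_cdfOf (ht : t < 1) : ∃ b, t < cdfOf μ b := by
  rw [cdfOf_eq_cdf]
  exact ((ProbabilityTheory.tendsto_cdf_atTop μ).eventually_const_lt ht).exists

lemma Ioo_subset_quantileDomain_cdfOf : Ioo 0 1 ⊆ quantileDomain (cdfOf μ) := by
  intro t ht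
  obtain ⟨a, ha⟩ := exists_cdfOf_lt μ ht.1
  obtain ⟨b, hb⟩ := exists_lt_cdfOf μ ht.2
  exact ⟨⟨b, hb.le⟩, a, fun x hx ↦ ((monotone_cdfOf μ).reflect_lt (ha.trans_le hx)).le⟩

lemma quantile_cdfOf_le_iff (ht : t ∈ Ioo (0 : ℝ) 1) :
    quantile (cdfOf μ) t ≤ x ↔ t ≤ cdfOf μ x := by
  have hdom := Ioo_subset_quantileDomain_cdfOf μ ht
  rw [cdfOf_eq_cdf] at hdom ⊢
  exact quantile_le_iff _ hdom

variable {μ} in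
lemma cdfOf_quantile (hF : Continuous (cdfOf μ)) (ht : t ∈ Ioo (0 : ℝ) 1) :
    cdfOf μ (quantile (cdfOf μ) t) = t := by
  obtain ⟨a, ha⟩ := exists_cdfOf_lt μ ht.1
  obtain ⟨b, hb⟩ := exists_lt_cdfOf μ ht.2
  have hrange : t ∈ range (cdfOf μ) :=
    mem_range_of_exists_le_of_exists_ge hF ⟨a, ha.le⟩ ⟨b, hb.le⟩
  have hdom := Ioo_subset_quantileDomain_cdfOf μ ht
  rw [cdfOf_eq_cdf] at hrange hdom ⊢
  exact apply_quantile_of_mem_range _ hdom hrange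

lemma map_quantile_cdfOf : (volume.restrict (Ioo 0 1)).map (quantile (cdfOf μ)) = μ := by
  refine Measure.ext_of_Iic _ _ fun x ↦ ?_
  have hae : quantile (cdfOf μ) ⁻¹' Iic x =ᵐ[volume.restrict (Ioo 0 1)] Iic (cdfOf μ x) := by
    filter_upwards [ae_restrict_mem measurableSet_Ioo] with t ht
    exact propext (quantile_cdfOf_le_iff μ ht)
  rw [Measure.map_apply (measurable_quantile _) measurableSet_Iic, measure_congr hae,
    volume_restrict_Ioo_Iic (cdfOf_mem_Icc μ x), cdfOf, ENNReal.ofReal_toReal (measure_ne_top _ _)]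

lemma integral_comp_quantile_cdfOf {g : ℝ → ℝ} (hg : AEStronglyMeasurable g μ) :
    ∫ t in (0 : ℝ)..1, g (quantile (cdfOf μ) t) = ∫ x, g x ∂μ := by
  have hmap := map_quantile_cdfOf μ
  rw [intervalIntegral_eq_setIntegral_Ioo zero_le_one,
    ← integral_map (measurable_quantile _).aemeasurable (hmap.symm ▸ hg), hmap]

lemma isSelfInverse_cdfOf_sub_quantile (z : ℝ) :
    IsSelfInverse fun t ↦ cdfOf μ (z - quantile (cdfOf μ) t) where
  mem_Icc _ _ := cdfOf_mem_Icc μ _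
  le_comm s hs t ht := by
    rw [← quantile_cdfOf_le_iff μ hs, ← quantile_cdfOf_le_iff μ ht, le_sub_comm]

end Cdf

section Convolution

variable {μ ν : Measure ℝ} [IsFiniteMeasure μ] [IsFiniteMeasure ν]

lemma cdfOf_conv (z : ℝ) : cdfOf (μ ∗ ν) z = ∫ x, cdfOf ν (z - x) ∂μ := by
  have hind (x y : ℝ) : (Iic z).indicator (1 : ℝ → ℝ) (x + y) = (Iic (z - x)).indicator 1 y := by
    simp only [indicator_apply, mem_Iic, le_sub_iff_add_le', Pi.one_apply]
  calc cdfOf (μ ∗ ν) z = ∫ w, (Iic z).indicator 1 w ∂(μ ∗ ν) :=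
        (integral_indicator_one measurableSet_Iic).symm
    _ = ∫ x, ∫ y, (Iic z).indicator 1 (x + y) ∂ν ∂μ :=
        integral_conv ((integrable_const 1).indicator measurableSet_Iic)
    _ = ∫ x, cdfOf ν (z - x) ∂μ := by
        simp only [hind, integral_indicator_one measurableSet_Iic]
        rfl

lemma continuous_cdfOf_conv (hν : Continuous (cdfOf ν)) : Continuous (cdfOf (μ ∗ ν)) := by
  rw [show cdfOf (μ ∗ ν) = fun z ↦ ∫ x, cdfOf ν (z - x) ∂μ from funext cdfOf_conv]
  refine continuous_of_dominated (bound := fun _ ↦ ν.real univ)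
    (fun z ↦ (hν.comp (by fun_prop)).aestronglyMeasurable)
    (fun z ↦ .of_forall fun x ↦ ?_) (integrable_const _)
    (.of_forall fun x ↦ hν.comp (by fun_prop))
  exact (Real.norm_of_nonneg measureReal_nonneg).trans_le (measureReal_mono (subset_univ _))

end Convolution

instance isProbabilityMeasure_convSelf (μ : Measure ℝ) [IsProbabilityMeasure μ] :
    IsProbabilityMeasure (convSelf μ) :=
  inferInstanceAs (IsProbabilityMeasure (μ ∗ μ))

section Kernel

variable (μ : Measure ℝ)

lemma kConvBar_of_nonpos {v : ℝ} (hv : v ≤ 0) : kConvBar μ v = fun _ ↦ 0 :=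
  funext fun _ ↦ if_pos hv

lemma kConvBar_of_one_le {v : ℝ} (hv : 1 ≤ v) : kConvBar μ v = fun _ ↦ 1 :=
  funext fun _ ↦ (if_neg (zero_lt_one.trans_le hv).not_ge).trans (if_pos hv)

lemma kConvBar_of_mem_Ioo {v : ℝ} (hv : v ∈ Ioo (0 : ℝ) 1) : kConvBar μ v = kConv μ v :=
  funext fun _ ↦ (if_neg hv.1.not_ge).trans (if_neg hv.2.not_ge)

lemma kConvBar_trichotomy (v : ℝ) :
    v ≤ 0 ∧ kConvBar μ v = (fun _ ↦ 0) ∨ 1 ≤ v ∧ kConvBar μ v = (fun _ ↦ 1) ∨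
      v ∈ Ioo 0 1 ∧ kConvBar μ v = kConv μ v := by
  obtain hv₀ | hv₀ := le_or_gt v 0
  · exact .inl ⟨hv₀, kConvBar_of_nonpos μ hv₀⟩
  obtain hv₁ | hv₁ := le_or_gt 1 v
  · exact .inr (.inl ⟨hv₁, kConvBar_of_one_le μ hv₁⟩)
  · exact .inr (.inr ⟨⟨hv₀, hv₁⟩, kConvBar_of_mem_Ioo μ ⟨hv₀, hv₁⟩⟩)

variable [IsProbabilityMeasure μ]

lemma isSelfInverse_kConv (v : ℝ) : IsSelfInverse (kConv μ v) :=
  isSelfInverse_cdfOf_sub_quantile μ _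

lemma monotoneOn_kConv (t : ℝ) : MonotoneOn (fun v ↦ kConv μ v t) (Ioo 0 1) :=
  fun _ hv _ hw hvw ↦ monotone_cdfOf μ <| sub_le_sub_right
    ((monotoneOn_quantile _).mono (Ioo_subset_quantileDomain_cdfOf (convSelf μ)) hv hw hvw) _

lemma measurable_kConv (v : ℝ) : Measurable (kConv μ v) :=
  (monotone_cdfOf μ).measurable.comp (measurable_const.sub (measurable_quantile _))

lemma integral_kConv (v : ℝ) :
    ∫ t in (0 : ℝ)..1, kConv μ v t = cdfOf (convSelf μ) (quantile (cdfOf (convSelf μ)) v) := by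
  set z := quantile (cdfOf (convSelf μ)) v
  have hmeas : Measurable fun x ↦ cdfOf μ (z - x) :=
    (monotone_cdfOf μ).measurable.comp (measurable_const.sub measurable_id)
  exact (integral_comp_quantile_cdfOf μ hmeas.aestronglyMeasurable).trans (cdfOf_conv z).symm

lemma kConvBar_mem_Icc (v t : ℝ) : kConvBar μ v t ∈ Icc (0 : ℝ) 1 := by
  unfold kConvBar
  split_ifs
  exacts [left_mem_Icc.2 zero_le_one, right_mem_Icc.2 zero_le_one, cdfOf_mem_Icc μ _]

lemma monotone_kConvBar (t : ℝ) : Monotone fun v ↦ kConvBar μ v t := by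
  intro v w hvw
  dsimp only
  obtain ⟨-, hv⟩ | ⟨hv, -⟩ | ⟨hv, hkv⟩ := kConvBar_trichotomy μ v
  · exact hv ▸ (kConvBar_mem_Icc μ w t).1
  · exact kConvBar_of_one_le μ (hv.trans hvw) ▸ (kConvBar_mem_Icc μ v t).2
  obtain ⟨hw, -⟩ | ⟨-, hw⟩ | ⟨hw, hkw⟩ := kConvBar_trichotomy μ w
  · exact absurd (hv.1.trans_le hvw) hw.not_gt
  · exact hw ▸ (kConvBar_mem_Icc μ v t).2
  · rw [hkv, hkw]
    exact monotoneOn_kConv μ t hv hw hvw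

lemma isSelfInverse_kConvBar (v : ℝ) : IsSelfInverse (kConvBar μ v) := by
  obtain ⟨-, hv⟩ | ⟨-, hv⟩ | ⟨-, hv⟩ := kConvBar_trichotomy μ v
  exacts [hv ▸ isSelfInverse_zero, hv ▸ isSelfInverse_one, hv ▸ isSelfInverse_kConv μ v]

lemma measurable_kConvBar (v : ℝ) : Measurable (kConvBar μ v) := by
  obtain ⟨-, hv⟩ | ⟨-, hv⟩ | ⟨-, hv⟩ := kConvBar_trichotomy μ v
  exacts [hv ▸ measurable_const, hv ▸ measurable_const, hv ▸ measurable_kConv μ v]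

variable {μ}

lemma integral_kConvBar (hF : Continuous (cdfOf μ)) {v : ℝ} (hv : v ∈ Icc (0 : ℝ) 1) :
    ∫ t in (0 : ℝ)..1, kConvBar μ v t = v := by
  obtain ⟨hv₀, hk⟩ | ⟨hv₁, hk⟩ | ⟨hv', hk⟩ := kConvBar_trichotomy μ v
  · rw [hk, intervalIntegral.integral_zero, hv₀.antisymm hv.1]
  · rw [hk, integral_one, sub_zero, hv.2.antisymm hv₁]
  · rw [hk, integral_kConv]
    exact cdfOf_quantile (continuous_cdfOf_conv hF) hv'

theorem isDerivFamily_kConvBar (hF : Continuous (cdfOf μ)) :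
    IsDerivFamily (fun v u ↦ ∫ t in (0 : ℝ)..u, kConvBar μ v t) (kConvBar μ) :=
  ⟨fun v _ ↦ measurable_kConvBar μ v, fun v _ t _ ↦ kConvBar_mem_Icc μ v t, fun _ _ _ _ ↦ rfl,
    fun t _ ↦ (monotone_kConvBar μ t).monotoneOn _, fun _ ↦ integral_kConvBar hF⟩

end Kernel

theorem convolution_copula_fixed_point_general (μ : Measure ℝ) [IsProbabilityMeasure μ] :
    (∀ v ∈ Ioo (0 : ℝ) 1, AntitoneOn (fun t ↦ kConv μ v t) (Ioo (0 : ℝ) 1)) ∧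
    (∀ t ∈ Ioo (0 : ℝ) 1, MonotoneOn (fun v ↦ kConv μ v t) (Ioo (0 : ℝ) 1)) ∧
    (∀ v ∈ Ioo (0 : ℝ) 1, ∀ u ∈ Icc (0 : ℝ) 1,
        ∫ t in (0 : ℝ)..1, min (kConv μ v t) u = ∫ t in (0 : ℝ)..u, kConv μ v t) ∧
    (Continuous (cdfOf μ) → IsCopula fun v u ↦ ∫ t in (0 : ℝ)..u, kConvBar μ v t) ∧
    (∀ v ∈ Icc (0 : ℝ) 1,
        ConcaveOn ℝ (Icc (0 : ℝ) 1) fun u ↦ ∫ t in (0 : ℝ)..u, kConvBar μ v t) ∧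
    (∀ v ∈ Icc (0 : ℝ) 1, ∀ u ∈ Icc (0 : ℝ) 1,
        ∫ t in (0 : ℝ)..1, min (kConvBar μ v t) u = ∫ t in (0 : ℝ)..u, kConvBar μ v t) :=
  ⟨fun v _ ↦ (isSelfInverse_kConv μ v).antitoneOn, fun t _ ↦ monotoneOn_kConv μ t,
    fun v _ _ ↦ (isSelfInverse_kConv μ v).integral_min,
    fun hF ↦ (isDerivFamily_kConvBar hF).isCopula,
    fun v _ ↦ (isSelfInverse_kConvBar μ v).concaveOn_integral,
    fun v _ _ ↦ (isSelfInverse_kConvBar μ v).integral_min⟩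

/-- Let `μ` be a probability measure on `ℝ` with continuous cdf
`F`, let `G` be the cdf of `μ ∗ μ`, and `k_v(t) = F(G⁻¹(v) − F⁻¹(t))`. Then:
(a) `t ↦ k_v(t)` is decreasing on `(0,1)` for every `v ∈ (0,1)`;
(b) `v ↦ k_v(t)` is increasing on `(0,1)` for every `t ∈ (0,1)`;
(c) `∫₀¹ min(k_v(t), u) dt = ∫₀ᵘ k_v(t) dt` for every `v ∈ (0,1)`, `u ∈ [0,1]`.
Consequently `C(v,u) := ∫₀ᵘ k_v(t) dt` (extended to the boundary values of `v`)
defines a stochastically increasing bivariate copula that is a fixed point of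
the upper product transform: `T(C) = C`. -/
theorem convolution_copula_fixed_point (μ : Measure ℝ) [IsProbabilityMeasure μ]
    (hF : Continuous (cdfOf μ)) :
    (∀ v ∈ Ioo (0:ℝ) 1, AntitoneOn (fun t => kConv μ v t) (Ioo (0:ℝ) 1)) ∧
    (∀ t ∈ Ioo (0:ℝ) 1, MonotoneOn (fun v => kConv μ v t) (Ioo (0:ℝ) 1)) ∧
    (∀ v ∈ Ioo (0:ℝ) 1, ∀ u ∈ Icc (0:ℝ) 1,
        (∫ t in (0:ℝ)..1, min (kConv μ v t) u) = ∫ t in (0:ℝ)..u, kConv μ v t) ∧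
    IsCopula (fun v u => ∫ t in (0:ℝ)..u, kConvBar μ v t) ∧
    (∀ v ∈ Icc (0:ℝ) 1,
        ConcaveOn ℝ (Icc (0:ℝ) 1) (fun u => ∫ t in (0:ℝ)..u, kConvBar μ v t)) ∧
    (∀ v ∈ Icc (0:ℝ) 1, ∀ u ∈ Icc (0:ℝ) 1,
        (∫ t in (0:ℝ)..1, min (kConvBar μ v t) u) = ∫ t in (0:ℝ)..u, kConvBar μ v t) :=
  have ⟨anti, mono, fixed, copula, concave, fixedBar⟩ := convolution_copula_fixed_point_general μ
  ⟨anti, mono, fixed, copula hF, concave, fixedBar⟩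

end
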